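/- arXiv:1905.11491 — 2 statements merged into one kernel-verified Lean document; each statement's English description precedes it below -/
import Mathlib

section
/- Let q > 0 and let P : ℝ³ → (0, ∞) be a continuous function with P(−x) = P(x) for all x and ∫_{ℝ³} |x| P(x)^{−q} dx < ∞. Then there exists a positive continuous function v : ℝ³ → (0, ∞) with v(−x) = v(x) for all x and sup_{x∈ℝ³} |v(x)|/(1+|x|) < ∞, satisfying v(x) = (1/8π)∫_{ℝ³} |x−y| (P(y) + v(y))^{−q} dy for all x ∈ ℝ³, and min_{ℝ³} v = v(0). -/
open MeasureTheory Filter Topology Real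

/-!
A solution is found by minimising a free energy over densities. Write `K g = ∫ dist · y * g y` and
`b = P ^ (-q)`. The equation `g = (P + K g) ^ (-q)` for the density `g = (P + v) ^ (-q)` is the
stationarity condition of
`E g = ⟨g, K g⟩ / 2 + ∫ D (g, b)`,
where `D` is the Bregman divergence of an antiderivative of `s ↦ -s ^ (-1 / q)`.
The quadratic part is not convex, so a Frank–Wolfe step takes the place of the direct method: with
`h = (P + K g) ^ (-q)`, the three-point identity for `D` gives
`E (g + t (h - g)) ≤ E g - t ∫ D (g, h) + t² ⟨b, K b⟩ / 2`.
As `E ≥ 0`, near-minimisers have arbitrarily small `∫ D (g, h)`. Along such a sequence the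
potentials `K g` are equi-Lipschitz and converge pointwise to some `v` after extraction, `g - h`
tends to zero almost everywhere by strong convexity, and dominated convergence gives
`v = K ((P + v) ^ (-q))`. Restricting to densities with the symmetries of `P` makes `v` even, and
`v`, an integral of convex functions, is then smallest at `0`.
-/

section PointwiseCompactness

theorem exists_subseq_tendsto_of_equicontinuous {X α : Type*} [TopologicalSpace X]
    [TopologicalSpace.SeparableSpace X] [PseudoMetricSpace α] {u : ℕ → X → α}
    (hu : Equicontinuous u) {K : X → Set α} (hK : ∀ x, IsCompact (K x))
    (huK : ∀ n x, u n x ∈ K x) :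
    ∃ φ : ℕ → ℕ, StrictMono φ ∧ ∃ w : X → α, ∀ x, Tendsto (fun n => u (φ n) x) atTop (𝓝 (w x)) := by
  obtain ⟨D, hD_countable, hD_dense⟩ := TopologicalSpace.exists_countable_dense X
  have : Countable D := hD_countable
  obtain ⟨a, -, φ, hφ, ha⟩ := (isCompact_univ_pi fun d : D => hK d).tendsto_subseq
    (x := fun n (d : D) => u n d) fun n d _ => huK n d
  have hcauchy (x : X) : CauchySeq fun n => u (φ n) x := by
    refine Metric.cauchySeq_iff'.2 fun ε hε => ?_
    obtain ⟨d, hdD, hd⟩ := ((mem_closure_iff_frequently.1 (hD_dense x)).and_eventually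
      (Metric.equicontinuousAt_iff_right.1 (hu x) (ε / 3) (by positivity))).exists
    obtain ⟨N, hN⟩ := Metric.cauchySeq_iff'.1 (tendsto_pi_nhds.1 ha ⟨d, hdD⟩).cauchySeq (ε / 3)
      (by positivity)
    refine ⟨N, fun n hn => ?_⟩
    calc dist (u (φ n) x) (u (φ N) x)
        ≤ dist (u (φ n) x) (u (φ n) d) + dist (u (φ n) d) (u (φ N) d)
          + dist (u (φ N) d) (u (φ N) x) := dist_triangle4 _ _ _ _
      _ < ε / 3 + ε / 3 + ε / 3 := by
          gcongr
          exacts [hd _, hN n hn, dist_comm (u (φ N) x) _ ▸ hd _]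
      _ = ε := by ring
  choose w _ hw using fun x =>
    cauchySeq_tendsto_of_isComplete (hK x).isComplete (fun n => huK (φ n) x) (hcauchy x)
  exact ⟨φ, hφ, w, hw⟩

theorem exists_subseq_tendsto_ae_zero_of_tendsto_integral {α : Type*} [MeasurableSpace α]
    {μ : Measure α} {f : ℕ → α → ℝ} (hf : ∀ n, Integrable (f n) μ) (hf_nonneg : ∀ n, 0 ≤ f n)
    (hlim : Tendsto (fun n => ∫ x, f n x ∂μ) atTop (𝓝 0)) :
    ∃ φ : ℕ → ℕ, StrictMono φ ∧ ∀ᵐ x ∂μ, Tendsto (fun n => f (φ n) x) atTop (𝓝 0) := by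
  suffices h : TendstoInMeasure μ f atTop 0 from h.exists_seq_tendsto_ae
  refine tendstoInMeasure_of_tendsto_eLpNorm one_ne_zero
    (fun n => (hf n).aestronglyMeasurable) aestronglyMeasurable_zero ?_
  have hnorm (n : ℕ) : eLpNorm (f n - 0) 1 μ = ENNReal.ofReal (∫ x, f n x ∂μ) := by
    rw [sub_zero, eLpNorm_one_eq_lintegral_enorm,
      ofReal_integral_eq_lintegral_ofReal (hf n) (.of_forall (hf_nonneg n))]
    exact lintegral_congr fun x => Real.enorm_eq_ofReal (hf_nonneg n x)
  simpa only [hnorm, ENNReal.ofReal_zero] using ENNReal.tendsto_ofReal hlim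

end PointwiseCompactness

section FirstMoment

variable {X : Type*} [PseudoMetricSpace X] [MeasurableSpace X] {μ : Measure X} {f g : X → ℝ}

/-- `g` is the density, with respect to `μ`, of a signed measure with finite mass and finite first
moment: exactly what makes its distance potential `∫ dist x y * g y ∂μ` converge together with its
Lipschitz bound. The moment condition is recorded for every base point, so that no base point has
to be carried around. -/
structure HasFiniteFirstMoment (g : X → ℝ) (μ : Measure X) : Prop where
  integrable : Integrable g μ
  integrable_dist_mul : ∀ x, Integrable (fun y => dist x y * g y) μ

namespace HasFiniteFirstMoment

theorem add (hf : HasFiniteFirstMoment f μ) (hg : HasFiniteFirstMoment g μ) :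
    HasFiniteFirstMoment (f + g) μ where
  integrable := hf.integrable.add hg.integrable
  integrable_dist_mul x := by
    simp only [Pi.add_apply, mul_add]
    exact (hf.integrable_dist_mul x).add (hg.integrable_dist_mul x)

theorem smul (hg : HasFiniteFirstMoment g μ) (t : ℝ) : HasFiniteFirstMoment (t • g) μ where
  integrable := hg.integrable.smul t
  integrable_dist_mul x := by
    simpa only [Pi.smul_apply, smul_eq_mul, mul_left_comm]
      using (hg.integrable_dist_mul x).const_mul t

variable [OpensMeasurableSpace X]

theorem mono (hf : HasFiniteFirstMoment f μ) (hg : AEStronglyMeasurable g μ)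
    (hgf : ∀ y, |g y| ≤ f y) : HasFiniteFirstMoment g μ where
  integrable := hf.integrable.mono' hg (.of_forall hgf)
  integrable_dist_mul x := by
    refine (hf.integrable_dist_mul x).mono'
      ((continuous_const.dist continuous_id).aestronglyMeasurable.mul hg) (.of_forall fun y => ?_)
    rw [norm_mul, Real.norm_of_nonneg dist_nonneg]
    gcongr
    exact hgf y

theorem of_basepoint (hg : Integrable g μ) {x₀ : X}
    (hg₀ : Integrable (fun y => dist x₀ y * g y) μ) : HasFiniteFirstMoment g μ where
  integrable := hg
  integrable_dist_mul x := by
    refine ((hg.norm.const_mul (dist x x₀)).add hg₀.norm).mono'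
      ((continuous_const.dist continuous_id).aestronglyMeasurable.mul hg.1) (.of_forall fun y => ?_)
    simp only [norm_mul, Real.norm_of_nonneg dist_nonneg, Pi.add_apply, ← add_mul]
    gcongr
    exact dist_triangle x x₀ y

end HasFiniteFirstMoment

theorem hasFiniteFirstMoment_smul_measure {c : ENNReal} (hc : c ≠ 0) (hc' : c ≠ ⊤) :
    HasFiniteFirstMoment g (c • μ) ↔ HasFiniteFirstMoment g μ := by
  have hiff (f : X → ℝ) : Integrable f (c • μ) ↔ Integrable f μ := integrable_smul_measure hc hc'
  exact ⟨fun h => ⟨(hiff _).1 h.1, fun x => (hiff _).1 (h.2 x)⟩,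
    fun h => ⟨(hiff _).2 h.1, fun x => (hiff _).2 (h.2 x)⟩⟩

end FirstMoment

section DistPotential

variable {X : Type*} [PseudoMetricSpace X] [MeasurableSpace X] {μ : Measure X} {f g : X → ℝ}

/-- The potential `x ↦ ∫ dist x y * g y ∂μ` of the density `g` for the distance kernel. A constant
in front of the kernel is encoded by rescaling `μ`. -/
noncomputable def distPotential (μ : Measure X) (g : X → ℝ) (x : X) : ℝ := ∫ y, dist x y * g y ∂μ

theorem distPotential_smul_measure (c : ENNReal) (g : X → ℝ) :
    distPotential (c • μ) g = c.toReal • distPotential μ g :=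
  funext fun _ => integral_smul_measure _ _

theorem distPotential_nonneg (hg : 0 ≤ g) : 0 ≤ distPotential μ g :=
  fun _ => integral_nonneg fun y => mul_nonneg dist_nonneg (hg y)

theorem distPotential_mono (hf : HasFiniteFirstMoment f μ) (hg : HasFiniteFirstMoment g μ)
    (hfg : f ≤ g) : distPotential μ f ≤ distPotential μ g := fun x =>
  integral_mono (hf.integrable_dist_mul x) (hg.integrable_dist_mul x)
    fun y => mul_le_mul_of_nonneg_left (hfg y) dist_nonneg

theorem abs_distPotential_le (hg : HasFiniteFirstMoment g μ) (hfg : ∀ y, |f y| ≤ g y) (x : X) :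
    |distPotential μ f x| ≤ distPotential μ g x := by
  refine norm_integral_le_of_norm_le (f := fun y => dist x y * f y) (hg.integrable_dist_mul x)
    (.of_forall fun y => ?_)
  rw [norm_mul, Real.norm_of_nonneg dist_nonneg]
  exact mul_le_mul_of_nonneg_left (hfg y) dist_nonneg

theorem lipschitzWith_distPotential (hg : HasFiniteFirstMoment g μ) :
    LipschitzWith (∫ y, |g y| ∂μ).toNNReal (distPotential μ g) := by
  refine LipschitzWith.of_dist_le' fun x x' => ?_
  calc dist (distPotential μ g x) (distPotential μ g x')
      = ‖∫ y, (dist x y - dist x' y) * g y ∂μ‖ := by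
        simp only [sub_mul, dist_eq_norm, distPotential,
          integral_sub (hg.integrable_dist_mul x) (hg.integrable_dist_mul x')]
    _ ≤ ∫ y, |g y| * dist x x' ∂μ := by
        refine norm_integral_le_of_norm_le (hg.integrable.abs.mul_const _) (.of_forall fun y => ?_)
        rw [norm_mul, mul_comm, Real.norm_eq_abs, Real.norm_eq_abs]
        gcongr
        exact abs_dist_sub_le x x' y
    _ = (∫ y, |g y| ∂μ) * dist x x' := integral_mul_const _ _

theorem distPotential_comp_isometryEquiv [BorelSpace X] (σ : X ≃ᵢ X) (hσ : MeasurePreserving σ μ μ)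
    (hg : ∀ y, g (σ y) = g y) (x : X) : distPotential μ g (σ x) = distPotential μ g x := by
  rw [distPotential, ← hσ.integral_comp σ.toHomeomorph.measurableEmbedding]
  simp only [σ.dist_eq, hg, distPotential]

theorem abs_distPotential_le_mul_one_add_dist (hg : HasFiniteFirstMoment g μ) (x₀ x : X) :
    |distPotential μ g x| ≤ (|distPotential μ g x₀| + ∫ y, |g y| ∂μ) * (1 + dist x x₀) := by
  have hmass : 0 ≤ ∫ y, |g y| ∂μ := integral_nonneg fun _ => abs_nonneg _
  have hlip := (lipschitzWith_distPotential hg).dist_le_mul x x₀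
  rw [Real.dist_eq, Real.coe_toNNReal _ hmass] at hlip
  nlinarith [abs_sub_abs_le_abs_sub (distPotential μ g x) (distPotential μ g x₀),
    mul_nonneg (abs_nonneg (distPotential μ g x₀)) (dist_nonneg (x := x) (y := x₀))]

theorem tendsto_distPotential [OpensMeasurableSpace X] {ι : Type*} {l : Filter ι}
    [l.IsCountablyGenerated] {b : X → ℝ} {G : ι → X → ℝ} (hb : HasFiniteFirstMoment b μ)
    (hG : ∀ i, AEStronglyMeasurable (G i) μ) (hGb : ∀ i y, |G i y| ≤ b y)
    (hlim : ∀ᵐ y ∂μ, Tendsto (fun i => G i y) l (𝓝 (g y))) (x : X) :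
    Tendsto (fun i => distPotential μ (G i) x) l (𝓝 (distPotential μ g x)) := by
  refine tendsto_integral_filter_of_dominated_convergence _
    (.of_forall fun i => (continuous_const.dist continuous_id).aestronglyMeasurable.mul (hG i))
    (.of_forall fun i => .of_forall fun y => ?_) (hb.integrable_dist_mul x)
    (hlim.mono fun y hy => hy.const_mul _)
  rw [norm_mul, Real.norm_of_nonneg dist_nonneg]
  exact mul_le_mul_of_nonneg_left (hGb i y) dist_nonneg

end DistPotential

section MutualEnergy

variable {X : Type*} [PseudoMetricSpace X] [MeasurableSpace X] {μ : Measure X} {f g h : X → ℝ}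

/-- The interaction `∬ f x * dist x y * g y ∂μ ∂μ` of two densities: a symmetric bilinear form on
densities with finite first moment. -/
noncomputable def mutualEnergy (μ : Measure X) (f g : X → ℝ) : ℝ :=
  ∫ x, f x * distPotential μ g x ∂μ

theorem mutualEnergy_smul_left (t : ℝ) (f g : X → ℝ) :
    mutualEnergy μ (t • f) g = t * mutualEnergy μ f g := by
  simp only [mutualEnergy, Pi.smul_apply, smul_eq_mul, mul_assoc, integral_const_mul]

theorem mutualEnergy_nonneg (hf : 0 ≤ f) (hg : 0 ≤ g) : 0 ≤ mutualEnergy μ f g :=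
  integral_nonneg fun x => mul_nonneg (hf x) (distPotential_nonneg hg x)

variable [OpensMeasurableSpace X] [SecondCountableTopology X]

theorem HasFiniteFirstMoment.integrable_prod_mul_dist_mul (hf : HasFiniteFirstMoment f μ)
    (hg : HasFiniteFirstMoment g μ) :
    Integrable (fun z : X × X => f z.1 * (dist z.1 z.2 * g z.2)) (μ.prod μ) := by
  rcases isEmpty_or_nonempty X with _ | ⟨⟨x₀⟩⟩
  · exact .of_finite
  have hbound := ((hf.integrable_dist_mul x₀).mul_prod hg.integrable).norm.add
    (hf.integrable.mul_prod (hg.integrable_dist_mul x₀)).norm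
  refine hbound.mono' (hf.integrable.1.comp_fst.mul
    (continuous_dist.aestronglyMeasurable.mul hg.integrable.1.comp_snd)) (.of_forall fun z => ?_)
  simp only [norm_mul, Real.norm_of_nonneg dist_nonneg, Pi.add_apply]
  calc ‖f z.1‖ * (dist z.1 z.2 * ‖g z.2‖)
      ≤ ‖f z.1‖ * ((dist z.1 x₀ + dist x₀ z.2) * ‖g z.2‖) := by
        gcongr
        exact dist_triangle _ _ _
    _ = dist x₀ z.1 * ‖f z.1‖ * ‖g z.2‖ + ‖f z.1‖ * (dist x₀ z.2 * ‖g z.2‖) := by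
        rw [dist_comm z.1 x₀]; ring

variable [SFinite μ]

theorem integrable_mul_distPotential (hf : HasFiniteFirstMoment f μ)
    (hg : HasFiniteFirstMoment g μ) : Integrable (fun x => f x * distPotential μ g x) μ := by
  simp only [distPotential, ← integral_const_mul]
  exact (hf.integrable_prod_mul_dist_mul hg).integral_prod_left

theorem mutualEnergy_comm (hf : HasFiniteFirstMoment f μ) (hg : HasFiniteFirstMoment g μ) :
    mutualEnergy μ f g = mutualEnergy μ g f := by
  simp only [mutualEnergy, distPotential, ← integral_const_mul]
  rw [integral_integral_swap (hf.integrable_prod_mul_dist_mul hg)]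
  refine integral_congr_ae (.of_forall fun y => integral_congr_ae (.of_forall fun x => ?_))
  simp only [dist_comm x y]
  ring

theorem mutualEnergy_add_left (hf : HasFiniteFirstMoment f μ) (hg : HasFiniteFirstMoment g μ)
    (hh : HasFiniteFirstMoment h μ) :
    mutualEnergy μ (f + g) h = mutualEnergy μ f h + mutualEnergy μ g h := by
  simp only [mutualEnergy, Pi.add_apply, add_mul]
  exact integral_add (integrable_mul_distPotential hf hh) (integrable_mul_distPotential hg hh)

theorem mutualEnergy_self_add_smul (hf : HasFiniteFirstMoment f μ) (hg : HasFiniteFirstMoment g μ)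
    (t : ℝ) :
    mutualEnergy μ (f + t • g) (f + t • g)
      = mutualEnergy μ f f + 2 * t * mutualEnergy μ g f + t ^ 2 * mutualEnergy μ g g := by
  have hright {k : X → ℝ} (hk : HasFiniteFirstMoment k μ) :
      mutualEnergy μ k (f + t • g) = mutualEnergy μ f k + t * mutualEnergy μ g k := by
    rw [mutualEnergy_comm hk (hf.add (hg.smul t)), mutualEnergy_add_left hf (hg.smul t) hk,
      mutualEnergy_smul_left]
  rw [hright (hf.add (hg.smul t)), mutualEnergy_comm hf (hf.add (hg.smul t)),
    mutualEnergy_comm hg (hf.add (hg.smul t)), mutualEnergy_add_left hf (hg.smul t) hf,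
    mutualEnergy_add_left hf (hg.smul t) hg, mutualEnergy_smul_left, mutualEnergy_smul_left,
    mutualEnergy_comm hf hg]
  ring

theorem mutualEnergy_self_le (hg : HasFiniteFirstMoment g μ) (hf : AEStronglyMeasurable f μ)
    (hfg : ∀ y, |f y| ≤ g y) : mutualEnergy μ f f ≤ mutualEnergy μ g g := by
  have hfm := hg.mono hf hfg
  refine integral_mono (integrable_mul_distPotential hfm hfm)
    (integrable_mul_distPotential hg hg) fun x => ?_
  calc f x * distPotential μ f x ≤ |f x| * |distPotential μ f x| := by
        rw [← abs_mul]; exact le_abs_self _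
    _ ≤ g x * distPotential μ g x := by
        have hg0 := (abs_nonneg _).trans (hfg x)
        gcongr
        exacts [hfg x, abs_distPotential_le hg hfg x]

end MutualEnergy

section Bregman

theorem mul_sub_le_sub_of_convexOn_of_hasDerivAt {S : Set ℝ} {f : ℝ → ℝ} {f' x y : ℝ}
    (hf : ConvexOn ℝ S f) (hx : x ∈ S) (hy : y ∈ S) (hfx : HasDerivAt f f' x) :
    f' * (y - x) ≤ f y - f x := by
  rcases lt_trichotomy x y with hxy | rfl | hyx
  · have := hf.le_slope_of_hasDerivAt hx hy hxy hfx
    rwa [slope_def_field, le_div_iff₀ (sub_pos.2 hxy)] at this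
  · simp
  · have := hf.slope_le_of_hasDerivAt hy hx hyx hfx
    rw [slope_def_field, div_le_iff₀ (sub_pos.2 hyx)] at this
    linarith

/-- The antiderivative of `s ↦ -s ^ (-r)` on `(0, ∞)`: minus the logarithm for `r = 1` and a
multiple of a power otherwise. It is the convex entropy generating `bregman`. -/
noncomputable def powEntropy (r s : ℝ) : ℝ := if r = 1 then -log s else s ^ (1 - r) / (r - 1)

theorem measurable_powEntropy (r : ℝ) : Measurable (powEntropy r) := by
  unfold powEntropy
  split_ifs <;> fun_prop

theorem hasDerivAt_powEntropy (r : ℝ) {s : ℝ} (hs : 0 < s) :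
    HasDerivAt (powEntropy r) (-s ^ (-r)) s := by
  unfold powEntropy
  split_ifs with hr
  · exact (hasDerivAt_log hs.ne').neg.congr_deriv (by rw [hr, rpow_neg_one])
  · refine ((hasDerivAt_rpow_const (.inl hs.ne')).div_const (r - 1)).congr_deriv ?_
    have := sub_ne_zero.2 hr
    rw [show 1 - r - 1 = -r by ring]
    field_simp
    ring

theorem strongConvexOn_powEntropy {r : ℝ} (hr : 0 ≤ r) (b : ℝ) :
    StrongConvexOn (Set.Ioc 0 b) (r * b ^ (-r - 1)) (powEntropy r) := by
  rw [strongConvexOn_iff_convex]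
  have hderiv {s : ℝ} (hs : 0 < s) :
      HasDerivAt (fun s => powEntropy r s - r * b ^ (-r - 1) / 2 * ‖s‖ ^ 2)
        (-s ^ (-r) - r * b ^ (-r - 1) * s) s := by
    simp only [Real.norm_eq_abs, sq_abs]
    refine ((hasDerivAt_powEntropy r hs).sub ((hasDerivAt_pow 2 s).const_mul _)).congr_deriv ?_
    push_cast
    ring
  have hderiv2 {s : ℝ} (hs : 0 < s) :
      HasDerivAt (fun s => -s ^ (-r) - r * b ^ (-r - 1) * s)
        (r * s ^ (-r - 1) - r * b ^ (-r - 1)) s := by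
    refine ((hasDerivAt_rpow_const (.inl hs.ne')).neg.sub
      ((hasDerivAt_id s).const_mul _)).congr_deriv ?_
    ring
  refine convexOn_of_hasDerivWithinAt2_nonneg (convex_Ioc 0 b)
    (fun s hs => (hderiv hs.1).continuousAt.continuousWithinAt)
    (fun s hs => (hderiv (interior_subset hs).1).hasDerivWithinAt)
    (fun s hs => (hderiv2 (interior_subset hs).1).hasDerivWithinAt) fun s hs => ?_
  have ⟨hs_pos, hs_le⟩ := interior_subset hs
  exact sub_nonneg.2 (mul_le_mul_of_nonneg_left
    (rpow_le_rpow_of_nonpos hs_pos hs_le (by linarith)) hr)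

/-- The Bregman divergence of `powEntropy r`, that is, the gap at `s` between `powEntropy r` and
its tangent line at `h`. -/
noncomputable def bregman (r s h : ℝ) : ℝ := powEntropy r s - powEntropy r h + h ^ (-r) * (s - h)

/-- The three-point identity of Bregman divergences. -/
theorem bregman_sub_bregman (r s h b : ℝ) :
    bregman r s b - bregman r h b = bregman r s h - (h ^ (-r) - b ^ (-r)) * (s - h) := by
  unfold bregman
  ring

theorem sq_le_bregman {r b s h : ℝ} (hr : 0 ≤ r) (hs : s ∈ Set.Ioc 0 b) (hh : h ∈ Set.Ioc 0 b) :
    r * b ^ (-r - 1) / 2 * (s - h) ^ 2 ≤ bregman r s h := by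
  have hderiv : HasDerivAt (fun s => powEntropy r s - r * b ^ (-r - 1) / 2 * ‖s‖ ^ 2)
      (-h ^ (-r) - r * b ^ (-r - 1) / 2 * (2 * h)) h := by
    simp only [Real.norm_eq_abs, sq_abs]
    refine ((hasDerivAt_powEntropy r hh.1).sub ((hasDerivAt_pow 2 h).const_mul _)).congr_deriv ?_
    push_cast
    ring
  have htangent := mul_sub_le_sub_of_convexOn_of_hasDerivAt
    (strongConvexOn_iff_convex.1 (strongConvexOn_powEntropy hr b)) hh hs hderiv
  simp only [Real.norm_eq_abs, sq_abs] at htangent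
  unfold bregman
  linarith

theorem bregman_nonneg {r s h : ℝ} (hr : 0 ≤ r) (hs : 0 < s) (hh : 0 < h) :
    0 ≤ bregman r s h := by
  refine le_trans ?_ (sq_le_bregman hr ⟨hs, le_max_left s h⟩ ⟨hh, le_max_right s h⟩)
  positivity

theorem bregman_le {r s h : ℝ} (hr : 0 ≤ r) (hs : 0 < s) (hh : 0 < h) :
    bregman r s h ≤ (s ^ (-r) - h ^ (-r)) * (h - s) := by
  have hsymm : bregman r s h + bregman r h s = (s ^ (-r) - h ^ (-r)) * (h - s) := by
    unfold bregman
    ring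
  linarith [bregman_nonneg hr hh hs]

theorem convexOn_bregman_left {r : ℝ} (hr : 0 ≤ r) (h : ℝ) :
    ConvexOn ℝ (Set.Ioi 0) fun s => bregman r s h := by
  refine ⟨convex_Ioi 0, fun s hs s' hs' a c ha hc hac => ?_⟩
  have hm : 0 < a • s + c • s' := convex_Ioi (0 : ℝ) hs hs' ha hc hac
  have hgap := add_nonneg (mul_nonneg ha (bregman_nonneg hr hs hm))
    (mul_nonneg hc (bregman_nonneg hr hs' hm))
  obtain rfl : a = 1 - c := by linarith
  simp only [bregman, smul_eq_mul] at hgap ⊢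
  linarith

theorem tendsto_sub_of_tendsto_bregman {ι : Type*} {l : Filter ι} {r b : ℝ} {s h : ι → ℝ}
    (hr : 0 < r) (hb : 0 < b) (hs : ∀ i, s i ∈ Set.Ioc 0 b) (hh : ∀ i, h i ∈ Set.Ioc 0 b)
    (hlim : Tendsto (fun i => bregman r (s i) (h i)) l (𝓝 0)) :
    Tendsto (fun i => s i - h i) l (𝓝 0) := by
  have hm : 0 < r * b ^ (-r - 1) / 2 := by positivity
  have hsq : Tendsto (fun i => (s i - h i) ^ 2) l (𝓝 0) := by
    refine squeeze_zero (fun i => sq_nonneg _) (fun i => ?_)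
      (by simpa using hlim.div_const (r * b ^ (-r - 1) / 2))
    rw [le_div_iff₀' hm]
    exact sq_le_bregman hr.le (hs i) (hh i)
  rw [tendsto_zero_iff_abs_tendsto_zero]
  simpa [Function.comp_def, sqrt_sq_eq_abs] using hsq.sqrt

end Bregman

section PowSource

/-- The density `(P + u) ^ (-q)` by which the integral equation couples the unknown `u` to its
potential: a solution is a fixed point of `u ↦ distPotential μ (powSource q P u)`. -/
noncomputable def powSource {X : Type*} (q : ℝ) (P u : X → ℝ) (y : X) : ℝ := (P y + u y) ^ (-q)

variable {X : Type*} {q : ℝ} {P u w : X → ℝ}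

theorem powSource_zero : powSource q P 0 = fun y => P y ^ (-q) := by
  ext y
  simp only [powSource, Pi.zero_apply, add_zero]

theorem powSource_pos (hP : ∀ y, 0 < P y) (hu : 0 ≤ u) (y : X) : 0 < powSource q P u y :=
  rpow_pos_of_pos (add_pos_of_pos_of_nonneg (hP y) (hu y)) _

theorem powSource_anti (hq : 0 ≤ q) (hP : ∀ y, 0 < P y) (hu : 0 ≤ u) (huw : u ≤ w) :
    powSource q P w ≤ powSource q P u := fun y =>
  rpow_le_rpow_of_nonpos (add_pos_of_pos_of_nonneg (hP y) (hu y)) (by gcongr; exact huw y)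
    (neg_nonpos.2 hq)

theorem powSource_rpow_neg_inv (hq : q ≠ 0) (hP : ∀ y, 0 < P y) (hu : 0 ≤ u) (y : X) :
    powSource q P u y ^ (-q⁻¹) = P y + u y := by
  rw [powSource, ← inv_neg, rpow_rpow_inv (add_nonneg (hP y).le (hu y)) (neg_ne_zero.2 hq)]

theorem tendsto_powSource {ι : Type*} {l : Filter ι} {U : ι → X → ℝ} {y : X} (hP : 0 < P y)
    (hu : 0 ≤ u y) (hU : Tendsto (fun i => U i y) l (𝓝 (u y))) :
    Tendsto (fun i => powSource q P (U i) y) l (𝓝 (powSource q P u y)) :=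
  (tendsto_const_nhds.add hU).rpow_const (.inl (add_pos_of_pos_of_nonneg hP hu).ne')

theorem aestronglyMeasurable_powSource [MeasurableSpace X] {μ : Measure X} (hq : q ≠ 0)
    (hP : ∀ y, 0 < P y) (hb : AEStronglyMeasurable (powSource q P 0) μ)
    (hu : AEStronglyMeasurable u μ) : AEStronglyMeasurable (powSource q P u) μ := by
  have hP_eq : P = fun y => powSource q P 0 y ^ (-q⁻¹) := by
    ext y
    rw [powSource_rpow_neg_inv hq hP le_rfl, Pi.zero_apply, add_zero]
  have hP_meas : AEMeasurable P μ := hP_eq ▸ hb.aemeasurable.pow_const _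
  exact ((hP_meas.add hu.aemeasurable).pow_const _).aestronglyMeasurable

end PowSource

section InheritsSymmetries

variable {X : Type*} [PseudoMetricSpace X] [MeasurableSpace X] {μ : Measure X} {P f g : X → ℝ}

/-- `g` is invariant under every `μ`-preserving isometry of the space that leaves `P` invariant. For
a measure invariant under `x ↦ -x` and an even `P`, this makes `g` even. -/
def InheritsSymmetries (μ : Measure X) (P g : X → ℝ) : Prop :=
  ∀ σ : X ≃ᵢ X, MeasurePreserving σ μ μ → (∀ x, P (σ x) = P x) → ∀ x, g (σ x) = g x

namespace InheritsSymmetries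

protected theorem powSource {q : ℝ} (hg : InheritsSymmetries μ P g) :
    InheritsSymmetries μ P (powSource q P g) := fun σ hσ hP x => by
  simp only [powSource, hP, hg σ hσ hP]

protected theorem distPotential [BorelSpace X] (hg : InheritsSymmetries μ P g) :
    InheritsSymmetries μ P (distPotential μ g) := fun σ hσ hP x =>
  distPotential_comp_isometryEquiv σ hσ (hg σ hσ hP) x

theorem add_smul_sub (hf : InheritsSymmetries μ P f) (hg : InheritsSymmetries μ P g) (t : ℝ) :
    InheritsSymmetries μ P (f + t • (g - f)) := fun σ hσ hP x => by
  simp only [Pi.add_apply, Pi.smul_apply, Pi.sub_apply, hf σ hσ hP, hg σ hσ hP]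

end InheritsSymmetries

end InheritsSymmetries

section Admissible

variable {X : Type*} [PseudoMetricSpace X] [MeasurableSpace X] {μ : Measure X} {q : ℝ}
  {P f g : X → ℝ}

/-- The convex class of densities over which `freeEnergy` is minimised. The map
`g ↦ powSource q P (distPotential μ g)` is antitone, so the order interval with end points
`powSource q P 0` and its image is stable under it. -/
structure IsAdmissible (q : ℝ) (P : X → ℝ) (μ : Measure X) (g : X → ℝ) : Prop where
  aestronglyMeasurable : AEStronglyMeasurable g μ
  inheritsSymmetries : InheritsSymmetries μ P g
  powSource_le : powSource q P (distPotential μ (powSource q P 0)) ≤ g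
  le_powSource : g ≤ powSource q P 0

namespace IsAdmissible

theorem pos (hP : ∀ y, 0 < P y) (hg : IsAdmissible q P μ g) (y : X) : 0 < g y :=
  (powSource_pos hP (distPotential_nonneg fun z => (powSource_pos hP le_rfl z).le) y).trans_le
    (hg.powSource_le y)

theorem mem_Ioc (hP : ∀ y, 0 < P y) (hg : IsAdmissible q P μ g) (y : X) :
    g y ∈ Set.Ioc 0 (powSource q P 0 y) :=
  ⟨hg.pos hP y, hg.le_powSource y⟩

protected theorem distPotential_nonneg (hP : ∀ y, 0 < P y) (hg : IsAdmissible q P μ g) :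
    0 ≤ distPotential μ g :=
  distPotential_nonneg fun y => (hg.pos hP y).le

theorem add_smul_sub (hf : IsAdmissible q P μ f) (hg : IsAdmissible q P μ g) {t : ℝ}
    (ht : t ∈ Set.Icc 0 1) : IsAdmissible q P μ (f + t • (g - f)) where
  aestronglyMeasurable :=
    hf.aestronglyMeasurable.add ((hg.aestronglyMeasurable.sub hf.aestronglyMeasurable).const_smul t)
  inheritsSymmetries := hf.inheritsSymmetries.add_smul_sub hg.inheritsSymmetries t
  powSource_le := (convex_Ici (powSource q P _)).add_smul_sub_mem hf.powSource_le hg.powSource_le ht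
  le_powSource := (convex_Iic (powSource q P 0)).add_smul_sub_mem hf.le_powSource hg.le_powSource ht

theorem abs_sub_le (hP : ∀ y, 0 < P y) (hf : IsAdmissible q P μ f) (hg : IsAdmissible q P μ g)
    (y : X) : |(f - g) y| ≤ powSource q P 0 y :=
  abs_sub_le_of_nonneg_of_le (hf.pos hP y).le (hf.le_powSource y) (hg.pos hP y).le
    (hg.le_powSource y)

variable [OpensMeasurableSpace X]

theorem hasFiniteFirstMoment (hP : ∀ y, 0 < P y) (hb : HasFiniteFirstMoment (powSource q P 0) μ)
    (hg : IsAdmissible q P μ g) : HasFiniteFirstMoment g μ :=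
  hb.mono hg.aestronglyMeasurable fun y => (abs_of_pos (hg.pos hP y)).trans_le (hg.le_powSource y)

theorem hasFiniteFirstMoment_sub (hP : ∀ y, 0 < P y)
    (hb : HasFiniteFirstMoment (powSource q P 0) μ) (hf : IsAdmissible q P μ f)
    (hg : IsAdmissible q P μ g) : HasFiniteFirstMoment (f - g) μ :=
  hb.mono (hf.aestronglyMeasurable.sub hg.aestronglyMeasurable) (hf.abs_sub_le hP hg)

theorem distPotential_le (hP : ∀ y, 0 < P y) (hb : HasFiniteFirstMoment (powSource q P 0) μ)
    (hg : IsAdmissible q P μ g) : distPotential μ g ≤ distPotential μ (powSource q P 0) :=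
  distPotential_mono (hg.hasFiniteFirstMoment hP hb) hb hg.le_powSource

protected theorem lipschitzWith_distPotential (hP : ∀ y, 0 < P y)
    (hb : HasFiniteFirstMoment (powSource q P 0) μ) (hg : IsAdmissible q P μ g) :
    LipschitzWith (∫ y, powSource q P 0 y ∂μ).toNNReal (distPotential μ g) := by
  have hgm := hg.hasFiniteFirstMoment hP hb
  refine (lipschitzWith_distPotential hgm).weaken (Real.toNNReal_le_toNNReal ?_)
  exact integral_mono hgm.integrable.abs hb.integrable fun y =>
    (abs_of_pos (hg.pos hP y)).trans_le (hg.le_powSource y)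

end IsAdmissible

theorem isAdmissible_powSource_zero (hq : 0 ≤ q) (hP : ∀ y, 0 < P y)
    (hb : AEStronglyMeasurable (powSource q P 0) μ) : IsAdmissible q P μ (powSource q P 0) where
  aestronglyMeasurable := hb
  inheritsSymmetries := InheritsSymmetries.powSource fun _ _ _ _ => rfl
  powSource_le := powSource_anti hq hP le_rfl
    (distPotential_nonneg fun y => (powSource_pos hP le_rfl y).le)
  le_powSource := le_rfl

theorem IsAdmissible.powSource_distPotential [BorelSpace X] (hq : 0 < q) (hP : ∀ y, 0 < P y)
    (hb : HasFiniteFirstMoment (powSource q P 0) μ) (hg : IsAdmissible q P μ g) :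
    IsAdmissible q P μ (powSource q P (distPotential μ g)) where
  aestronglyMeasurable := aestronglyMeasurable_powSource hq.ne' hP hb.integrable.1
    (hg.lipschitzWith_distPotential hP hb).continuous.aestronglyMeasurable
  inheritsSymmetries := hg.inheritsSymmetries.distPotential.powSource
  powSource_le := powSource_anti hq.le hP (hg.distPotential_nonneg hP) (hg.distPotential_le hP hb)
  le_powSource := powSource_anti hq.le hP le_rfl (hg.distPotential_nonneg hP)

end Admissible

section FreeEnergy

variable {X : Type*} [PseudoMetricSpace X] [MeasurableSpace X] {μ : Measure X} {q : ℝ}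
  {P g h : X → ℝ}

/-- The energy functional of the integral equation, normalised by the density `powSource q P 0`. Its
critical points are the densities `g` with `g = powSource q P (distPotential μ g)`. -/
noncomputable def freeEnergy (q : ℝ) (P : X → ℝ) (μ : Measure X) (g : X → ℝ) : ℝ :=
  mutualEnergy μ g g / 2 + ∫ y, bregman q⁻¹ (g y) (powSource q P 0 y) ∂μ

/-- The pointwise defect of `g` in the equation `g = powSource q P (distPotential μ g)`, measured by
the Bregman divergence. -/
noncomputable def fixedPointGap (q : ℝ) (P : X → ℝ) (μ : Measure X) (g : X → ℝ) (y : X) : ℝ :=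
  bregman q⁻¹ (g y) (powSource q P (distPotential μ g) y)

theorem freeEnergy_nonneg (hq : 0 ≤ q) (hP : ∀ y, 0 < P y) (hg : ∀ y, 0 < g y) :
    0 ≤ freeEnergy q P μ g := by
  have hself := mutualEnergy_nonneg (μ := μ) (fun y => (hg y).le) fun y => (hg y).le
  have hdiv : 0 ≤ ∫ y, bregman q⁻¹ (g y) (powSource q P 0 y) ∂μ := integral_nonneg fun y =>
    bregman_nonneg (inv_nonneg.2 hq) (hg y) (powSource_pos hP le_rfl y)
  unfold freeEnergy
  positivity

theorem fixedPointGap_nonneg (hq : 0 ≤ q) (hP : ∀ y, 0 < P y) (hg : ∀ y, 0 < g y) :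
    0 ≤ fixedPointGap q P μ g := fun y =>
  bregman_nonneg (inv_nonneg.2 hq) (hg y)
    (powSource_pos hP (distPotential_nonneg fun z => (hg z).le) y)

-- For `h = powSource q P (distPotential μ g)` the two powers in the three-point identity are
-- `P + distPotential μ g` and `P`, so `P` cancels.
theorem fixedPointGap_eq (hq : q ≠ 0) (hP : ∀ y, 0 < P y) (hg : 0 ≤ g) (y : X) :
    fixedPointGap q P μ g y
      = bregman q⁻¹ (g y) (powSource q P 0 y)
        - bregman q⁻¹ (powSource q P (distPotential μ g) y) (powSource q P 0 y)
        - (powSource q P (distPotential μ g) - g) y * distPotential μ g y := by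
  rw [bregman_sub_bregman, powSource_rpow_neg_inv hq hP (distPotential_nonneg hg),
    powSource_rpow_neg_inv hq hP le_rfl, fixedPointGap, Pi.zero_apply, Pi.sub_apply]
  ring

variable [SecondCountableTopology X] [SFinite μ]

theorem IsAdmissible.integrable_bregman [OpensMeasurableSpace X] (hq : 0 < q) (hP : ∀ y, 0 < P y)
    (hb : HasFiniteFirstMoment (powSource q P 0) μ) (hg : IsAdmissible q P μ g) :
    Integrable (fun y => bregman q⁻¹ (g y) (powSource q P 0 y)) μ := by
  have hr : 0 ≤ q⁻¹ := inv_nonneg.2 hq.le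
  have hb_pos : ∀ y, 0 < powSource q P 0 y := powSource_pos hP le_rfl
  have hmeas : AEMeasurable (fun y => bregman q⁻¹ (g y) (powSource q P 0 y)) μ := by
    have hgm := hg.aestronglyMeasurable.aemeasurable
    have hbm := hb.integrable.1.aemeasurable
    have hφ := measurable_powEntropy q⁻¹
    exact ((hφ.comp_aemeasurable hgm).sub (hφ.comp_aemeasurable hbm)).add
      ((hbm.pow_const _).mul (hgm.sub hbm))
  refine (integrable_mul_distPotential hb hb).mono' hmeas.aestronglyMeasurable
    (.of_forall fun y => ?_)
  have hKb : 0 ≤ distPotential μ (powSource q P 0) := distPotential_nonneg fun z => (hb_pos z).le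
  have hg_rpow : g y ^ (-q⁻¹) ≤ P y + distPotential μ (powSource q P 0) y := by
    rw [← powSource_rpow_neg_inv hq.ne' hP hKb]
    exact rpow_le_rpow_of_nonpos (powSource_pos hP hKb y) (hg.powSource_le y) (neg_nonpos.2 hr)
  rw [Real.norm_of_nonneg (bregman_nonneg hr (hg.pos hP y) (hb_pos y))]
  calc bregman q⁻¹ (g y) (powSource q P 0 y)
      ≤ (g y ^ (-q⁻¹) - powSource q P 0 y ^ (-q⁻¹)) * (powSource q P 0 y - g y) :=
        bregman_le hr (hg.pos hP y) (hb_pos y)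
    _ ≤ distPotential μ (powSource q P 0) y * powSource q P 0 y := by
        rw [powSource_rpow_neg_inv hq.ne' hP le_rfl, Pi.zero_apply]
        gcongr
        · exact sub_nonneg.2 (hg.le_powSource y)
        · exact hKb y
        · linarith
        · linarith [hg.pos hP y]
    _ = powSource q P 0 y * distPotential μ (powSource q P 0) y := mul_comm _ _

theorem integral_bregman_add_smul_sub_le [OpensMeasurableSpace X] (hq : 0 < q)
    (hP : ∀ y, 0 < P y) (hb : HasFiniteFirstMoment (powSource q P 0) μ) (hg : IsAdmissible q P μ g)
    (hh : IsAdmissible q P μ h) {t : ℝ} (ht : t ∈ Set.Icc 0 1) :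
    ∫ y, bregman q⁻¹ ((g + t • (h - g)) y) (powSource q P 0 y) ∂μ
      ≤ (1 - t) * ∫ y, bregman q⁻¹ (g y) (powSource q P 0 y) ∂μ
        + t * ∫ y, bregman q⁻¹ (h y) (powSource q P 0 y) ∂μ := by
  have hgi := hg.integrable_bregman hq hP hb
  have hhi := hh.integrable_bregman hq hP hb
  rw [← integral_const_mul, ← integral_const_mul,
    ← integral_add (hgi.const_mul _) (hhi.const_mul _)]
  refine integral_mono ((hg.add_smul_sub hh ht).integrable_bregman hq hP hb)
    ((hgi.const_mul _).add (hhi.const_mul _)) fun y => ?_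
  have hconv := (convexOn_bregman_left (inv_nonneg.2 hq.le) (powSource q P 0 y)).2
    (hg.pos hP y) (hh.pos hP y) (sub_nonneg.2 ht.2) ht.1 (sub_add_cancel 1 t)
  have hcomb : (g + t • (h - g)) y = (1 - t) * g y + t * h y := by
    simp only [Pi.add_apply, Pi.smul_apply, Pi.sub_apply, smul_eq_mul]
    ring
  simpa only [hcomb, smul_eq_mul] using hconv

variable [BorelSpace X]

theorem IsAdmissible.integrable_fixedPointGap (hq : 0 < q) (hP : ∀ y, 0 < P y)
    (hb : HasFiniteFirstMoment (powSource q P 0) μ) (hg : IsAdmissible q P μ g) :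
    Integrable (fixedPointGap q P μ g) μ := by
  have hh := hg.powSource_distPotential hq hP hb
  refine (((hg.integrable_bregman hq hP hb).sub (hh.integrable_bregman hq hP hb)).sub
    (integrable_mul_distPotential (hh.hasFiniteFirstMoment_sub hP hb hg)
      (hg.hasFiniteFirstMoment hP hb))).congr (.of_forall fun y => ?_)
  exact (fixedPointGap_eq hq.ne' hP (fun z => (hg.pos hP z).le) y).symm

theorem IsAdmissible.integral_fixedPointGap (hq : 0 < q) (hP : ∀ y, 0 < P y)
    (hb : HasFiniteFirstMoment (powSource q P 0) μ) (hg : IsAdmissible q P μ g) :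
    ∫ y, fixedPointGap q P μ g y ∂μ
      = ∫ y, bregman q⁻¹ (g y) (powSource q P 0 y) ∂μ
        - ∫ y, bregman q⁻¹ (powSource q P (distPotential μ g) y) (powSource q P 0 y) ∂μ
        - mutualEnergy μ (powSource q P (distPotential μ g) - g) g := by
  have hh := hg.powSource_distPotential hq hP hb
  have hgi := hg.integrable_bregman hq hP hb
  have hhi := hh.integrable_bregman hq hP hb
  have hmi := integrable_mul_distPotential (hh.hasFiniteFirstMoment_sub hP hb hg)
    (hg.hasFiniteFirstMoment hP hb)
  simp only [fixedPointGap_eq hq.ne' hP fun z => (hg.pos hP z).le]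
  exact (integral_sub (hgi.sub hhi) hmi).trans (congrArg (· - _) (integral_sub hgi hhi))

theorem IsAdmissible.freeEnergy_add_smul_sub_le (hq : 0 < q) (hP : ∀ y, 0 < P y)
    (hb : HasFiniteFirstMoment (powSource q P 0) μ) (hg : IsAdmissible q P μ g) {t : ℝ}
    (ht : t ∈ Set.Icc 0 1) :
    freeEnergy q P μ (g + t • (powSource q P (distPotential μ g) - g))
      ≤ freeEnergy q P μ g - t * ∫ y, fixedPointGap q P μ g y ∂μ
        + t ^ 2 / 2 * mutualEnergy μ (powSource q P 0) (powSource q P 0) := by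
  have hh := hg.powSource_distPotential hq hP hb
  have hself := mutualEnergy_self_le hb (hh.aestronglyMeasurable.sub hg.aestronglyMeasurable)
    (hh.abs_sub_le hP hg)
  have hdiv := integral_bregman_add_smul_sub_le hq hP hb hg hh ht
  rw [hg.integral_fixedPointGap hq hP hb, freeEnergy, freeEnergy, mutualEnergy_self_add_smul
    (hg.hasFiniteFirstMoment hP hb) (hh.hasFiniteFirstMoment_sub hP hb hg)]
  linarith [mul_le_mul_of_nonneg_left hself (sq_nonneg t)]

theorem exists_isAdmissible_integral_fixedPointGap_lt (hq : 0 < q) (hP : ∀ y, 0 < P y)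
    (hb : HasFiniteFirstMoment (powSource q P 0) μ) {ε : ℝ} (hε : 0 < ε) :
    ∃ g, IsAdmissible q P μ g ∧ ∫ y, fixedPointGap q P μ g y ∂μ < ε := by
  set C := mutualEnergy μ (powSource q P 0) (powSource q P 0)
  have hb_nonneg : 0 ≤ powSource q P 0 := fun y => (powSource_pos hP le_rfl y).le
  have hC : 0 ≤ C := mutualEnergy_nonneg hb_nonneg hb_nonneg
  let E : Set ℝ := freeEnergy q P μ '' {g | IsAdmissible q P μ g}
  have hE_nonempty : E.Nonempty :=
    ⟨_, powSource q P 0, isAdmissible_powSource_zero hq.le hP hb.integrable.1, rfl⟩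
  have hE_bddBelow : BddBelow E := by
    refine ⟨0, ?_⟩
    rintro _ ⟨g, hg, rfl⟩
    exact freeEnergy_nonneg hq.le hP (hg.pos hP)
  let t := ε / (C + ε)
  have ht_pos : 0 < t := by positivity
  have ht : t ∈ Set.Icc 0 1 := ⟨ht_pos.le, div_le_one_of_le₀ (by linarith) (by positivity)⟩
  have htC : t * (C + ε) = ε := div_mul_cancel₀ _ (by positivity)
  obtain ⟨_, ⟨g, hg, rfl⟩, hg_lt⟩ :=
    exists_lt_of_csInf_lt hE_nonempty (lt_add_of_pos_right (sInf E) (by positivity : 0 < t * ε / 2))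
  refine ⟨g, hg, ?_⟩
  have hmin : sInf E ≤ freeEnergy q P μ (g + t • (powSource q P (distPotential μ g) - g)) :=
    csInf_le hE_bddBelow ⟨_, hg.add_smul_sub (hg.powSource_distPotential hq hP hb) ht, rfl⟩
  have hdecrease := hg.freeEnergy_add_smul_sub_le hq hP hb ht
  refine lt_of_mul_lt_mul_left ?_ ht_pos.le
  nlinarith [mul_pos ht_pos ht_pos]

end FreeEnergy

section FixedPoint

variable {X : Type*} [PseudoMetricSpace X] [MeasurableSpace X] {μ : Measure X} {q : ℝ}
  {P : X → ℝ}

theorem exists_subseq_tendsto_distPotential [OpensMeasurableSpace X]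
    [SecondCountableTopology X] (hP : ∀ y, 0 < P y)
    (hb : HasFiniteFirstMoment (powSource q P 0) μ) {g : ℕ → X → ℝ}
    (hg : ∀ n, IsAdmissible q P μ (g n)) :
    ∃ φ : ℕ → ℕ, StrictMono φ ∧ ∃ v : X → ℝ,
      ∀ x, Tendsto (fun n => distPotential μ (g (φ n)) x) atTop (𝓝 (v x)) :=
  exists_subseq_tendsto_of_equicontinuous
    (LipschitzWith.uniformEquicontinuous _ _
      fun n => (hg n).lipschitzWith_distPotential hP hb).equicontinuous
    (fun x => isCompact_Icc (a := 0) (b := distPotential μ (powSource q P 0) x))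
    fun n x => ⟨(hg n).distPotential_nonneg hP x, (hg n).distPotential_le hP hb x⟩

variable [BorelSpace X]

theorem tendsto_of_tendsto_fixedPointGap {ι : Type*} {l : Filter ι} {g : ι → X → ℝ}
    {v : X → ℝ} {y : X} (hq : 0 < q) (hP : ∀ y, 0 < P y)
    (hb : HasFiniteFirstMoment (powSource q P 0) μ) (hg : ∀ i, IsAdmissible q P μ (g i))
    (hv : 0 ≤ v)
    (hlim : Tendsto (fun i => distPotential μ (g i) y) l (𝓝 (v y)))
    (hgap : Tendsto (fun i => fixedPointGap q P μ (g i) y) l (𝓝 0)) :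
    Tendsto (fun i => g i y) l (𝓝 (powSource q P v y)) := by
  have hdiff := tendsto_sub_of_tendsto_bregman (inv_pos.2 hq) (powSource_pos hP le_rfl y)
    (fun i => (hg i).mem_Ioc hP y)
    (fun i => ((hg i).powSource_distPotential hq hP hb).mem_Ioc hP y) hgap
  simpa only [sub_add_cancel, zero_add]
    using hdiff.add (tendsto_powSource (q := q) (hP y) (hv y) hlim)

theorem exists_eq_distPotential_powSource [SecondCountableTopology X] [SFinite μ] (hq : 0 < q)
    (hP : ∀ y, 0 < P y)
    (hb : HasFiniteFirstMoment (powSource q P 0) μ) :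
    ∃ v : X → ℝ, 0 ≤ v ∧ InheritsSymmetries μ P v ∧ HasFiniteFirstMoment (powSource q P v) μ ∧
      v = distPotential μ (powSource q P v) := by
  choose g hg hgap using fun n : ℕ =>
    exists_isAdmissible_integral_fixedPointGap_lt hq hP hb (Nat.one_div_pos_of_nat (n := n))
  obtain ⟨φ, hφ, v, hv⟩ := exists_subseq_tendsto_distPotential hP hb hg
  have hgap_nonneg (n : ℕ) := fixedPointGap_nonneg (μ := μ) hq.le hP ((hg n).pos hP)
  have hgap_lim : Tendsto (fun n => ∫ y, fixedPointGap q P μ (g n) y ∂μ) atTop (𝓝 0) :=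
    squeeze_zero (fun n => integral_nonneg (hgap_nonneg n)) (fun n => (hgap n).le)
      tendsto_one_div_add_atTop_nhds_zero_nat
  obtain ⟨ψ, hψ, hgap_ae⟩ := exists_subseq_tendsto_ae_zero_of_tendsto_integral
    (fun n => (hg (φ n)).integrable_fixedPointGap hq hP hb) (fun n => hgap_nonneg (φ n))
    (hgap_lim.comp hφ.tendsto_atTop)
  have hv_nonneg : 0 ≤ v := fun x =>
    ge_of_tendsto' (hv x) fun n => (hg (φ n)).distPotential_nonneg hP x
  have hv_sub (x : X) := (hv x).comp hψ.tendsto_atTop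
  have hv_eq : v = distPotential μ (powSource q P v) := funext fun x =>
    tendsto_nhds_unique (hv_sub x) <| tendsto_distPotential hb
      (fun n => (hg (φ (ψ n))).aestronglyMeasurable)
      (fun n y => (abs_of_pos ((hg _).pos hP y)).trans_le ((hg _).le_powSource y))
      (hgap_ae.mono fun y => tendsto_of_tendsto_fixedPointGap hq hP hb
        (fun n => hg (φ (ψ n))) hv_nonneg (hv_sub y)) x
  have hv_symm : InheritsSymmetries μ P v := fun σ hσ hPσ x =>
    tendsto_nhds_unique (hv (σ x)) <| by
      simpa only [(hg _).inheritsSymmetries.distPotential σ hσ hPσ] using hv x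
  have hv_meas : AEStronglyMeasurable v μ := aestronglyMeasurable_of_tendsto_ae atTop
    (fun n => ((hg (φ n)).lipschitzWith_distPotential hP hb).continuous.aestronglyMeasurable)
    (.of_forall hv)
  refine ⟨v, hv_nonneg, hv_symm, ?_, hv_eq⟩
  refine hb.mono (aestronglyMeasurable_powSource hq.ne' hP hb.integrable.1 hv_meas) fun y => ?_
  rw [abs_of_pos (powSource_pos hP hv_nonneg y)]
  exact powSource_anti hq.le hP le_rfl hv_nonneg y

theorem exists_eq_smul_distPotential_powSource [SecondCountableTopology X] [SFinite μ] {c : ℝ}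
    (hc : 0 < c) (hq : 0 < q) (hP : ∀ y, 0 < P y) (hb : HasFiniteFirstMoment (powSource q P 0) μ) :
    ∃ v : X → ℝ, 0 ≤ v ∧ InheritsSymmetries μ P v ∧ HasFiniteFirstMoment (powSource q P v) μ ∧
      v = c • distPotential μ (powSource q P v) := by
  have hmoment (g : X → ℝ) := hasFiniteFirstMoment_smul_measure (μ := μ) (g := g)
    (ENNReal.ofReal_pos.2 hc).ne' ENNReal.ofReal_ne_top
  obtain ⟨v, hv_nonneg, hv_symm, hv_moment, hv⟩ :=
    exists_eq_distPotential_powSource (μ := ENNReal.ofReal c • μ) hq hP ((hmoment _).2 hb)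
  rw [distPotential_smul_measure, ENNReal.toReal_ofReal hc.le] at hv
  exact ⟨v, hv_nonneg, fun σ hσ => hv_symm σ (hσ.smul_measure _), (hmoment _).1 hv_moment, hv⟩

end FixedPoint

section Potential

variable {X : Type*} [MeasurableSpace X] {μ : Measure X} {g : X → ℝ}

theorem distPotential_pos [MetricSpace X] [Nontrivial X] [μ.IsOpenPosMeasure]
    (hg : HasFiniteFirstMoment g μ) (hg_pos : ∀ y, 0 < g y) (x : X) : 0 < distPotential μ g x := by
  refine (integral_pos_iff_support_of_nonneg (fun y => mul_nonneg dist_nonneg (hg_pos y).le)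
    (hg.integrable_dist_mul x)).2 ?_
  have hsupport : Function.support (fun y => dist x y * g y) = {x}ᶜ := by
    ext y
    simp [(hg_pos y).ne', eq_comm]
  rw [hsupport]
  exact isOpen_compl_singleton.measure_pos μ (exists_ne x)

theorem HasFiniteFirstMoment.of_continuous [PseudoMetricSpace X] [ProperSpace X]
    [OpensMeasurableSpace X] [IsLocallyFiniteMeasure μ] (hg : Continuous g) {x₀ : X}
    (hg₀ : Integrable (fun y => dist x₀ y * g y) μ) : HasFiniteFirstMoment g μ := by
  refine .of_basepoint (hg.locallyIntegrable.integrable_of_isBigO_cocompact ?_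
    (hg₀.integrableAtFilter _)) hg₀
  refine .of_bound 1 ?_
  filter_upwards [(tendsto_dist_left_cocompact_atTop x₀).eventually_ge_atTop 1] with y hy
  rw [norm_mul, Real.norm_of_nonneg dist_nonneg, one_mul]
  exact le_mul_of_one_le_left (norm_nonneg _) hy

theorem convexOn_distPotential [NormedAddCommGroup X] [NormedSpace ℝ X]
    (hg : HasFiniteFirstMoment g μ) (hg_nonneg : 0 ≤ g) :
    ConvexOn ℝ Set.univ (distPotential μ g) := by
  refine ⟨convex_univ, fun x _ x' _ a b ha hb hab => ?_⟩
  have hx := (hg.integrable_dist_mul x).const_mul a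
  have hx' := (hg.integrable_dist_mul x').const_mul b
  simp only [distPotential, smul_eq_mul]
  rw [← integral_const_mul, ← integral_const_mul, ← integral_add hx hx']
  refine integral_mono (hg.integrable_dist_mul _) (hx.add hx') fun y => ?_
  calc dist (a • x + b • x') y * g y ≤ (a * dist x y + b * dist x' y) * g y :=
        mul_le_mul_of_nonneg_right
          ((convexOn_dist y convex_univ).2 trivial trivial ha hb hab) (hg_nonneg y)
    _ = a * (dist x y * g y) + b * (dist x' y * g y) := by ring

theorem apply_zero_le_of_convexOn_of_even {E : Type*} [AddCommGroup E] [Module ℝ E] {f : E → ℝ}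
    (hf : ConvexOn ℝ Set.univ f) (heven : ∀ x, f (-x) = f x) (x : E) : f 0 ≤ f x := by
  have hmid := hf.2 (Set.mem_univ x) (Set.mem_univ (-x)) one_half_pos.le one_half_pos.le
    (add_halves 1)
  rw [smul_neg, add_neg_cancel, heven, ← add_smul, add_halves, one_smul] at hmid
  exact hmid

end Potential

section NormedSpace

variable {E : Type*} [NormedAddCommGroup E] [MeasurableSpace E] [BorelSpace E] {μ : Measure E}

theorem InheritsSymmetries.even [NormedSpace ℝ E] [μ.IsNegInvariant] {P g : E → ℝ}
    (hg : InheritsSymmetries μ P g) (hP : ∀ x, P (-x) = P x) (x : E) : g (-x) = g x :=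
  hg (LinearIsometryEquiv.neg ℝ).toIsometryEquiv (Measure.measurePreserving_neg μ) hP x

theorem exists_even_solution_integral_equation_full_kernel_general [NormedSpace ℝ E]
    [FiniteDimensional ℝ E] [Nontrivial E] [IsLocallyFiniteMeasure μ] [μ.IsOpenPosMeasure]
    [μ.IsNegInvariant] {c q : ℝ} (hc : 0 < c) (hq : 0 < q) {P : E → ℝ} (hPcont : Continuous P)
    (hPpos : ∀ x, 0 < P x) (hPeven : ∀ x, P (-x) = P x)
    (hPint : Integrable (fun x => ‖x‖ * P x ^ (-q)) μ) :
    ∃ v : E → ℝ, Continuous v ∧ (∀ x, 0 < v x) ∧ (∀ x, v (-x) = v x) ∧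
      (∃ C : ℝ, ∀ x, |v x| ≤ C * (1 + ‖x‖)) ∧
      (∀ x, Integrable (fun y => ‖x - y‖ * (P y + v y) ^ (-q)) μ) ∧
      (∀ x, v x = c * ∫ y, ‖x - y‖ * (P y + v y) ^ (-q) ∂μ) ∧
      (∀ x, v 0 ≤ v x) := by
  have : ProperSpace E := FiniteDimensional.proper_real E
  have hb : HasFiniteFirstMoment (powSource q P 0) μ := by
    rw [powSource_zero]
    exact .of_continuous (x₀ := 0) (hPcont.rpow_const fun x => .inl (hPpos x).ne')
      (by simpa only [dist_zero_left] using hPint)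
  obtain ⟨v, hv_nonneg, hv_symm, hv_moment, hv⟩ :=
    exists_eq_smul_distPotential_powSource hc hq hPpos hb
  have hpos := powSource_pos (q := q) hPpos hv_nonneg
  have hv_even := hv_symm.even hPeven
  have hv_apply (x : E) : v x = c * distPotential μ (powSource q P v) x := congrFun hv x
  refine ⟨v, ?_, fun x => ?_, hv_even, ⟨c * (|distPotential μ (powSource q P v) 0|
    + ∫ y, |powSource q P v y| ∂μ), fun x => ?_⟩, fun x => ?_, fun x => ?_, ?_⟩
  · rw [hv]
    exact (lipschitzWith_distPotential hv_moment).continuous.const_smul c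
  · rw [hv_apply]
    exact mul_pos hc (distPotential_pos hv_moment hpos x)
  · rw [hv_apply, abs_mul, abs_of_pos hc, ← dist_zero_right, mul_assoc]
    gcongr
    exact abs_distPotential_le_mul_one_add_dist hv_moment 0 x
  · simpa only [powSource, dist_eq_norm] using hv_moment.integrable_dist_mul x
  · simpa only [distPotential, powSource, dist_eq_norm] using hv_apply x
  · refine apply_zero_le_of_convexOn_of_even ?_ hv_even
    rw [hv]
    exact (convexOn_distPotential hv_moment fun y => (hpos y).le).smul hc.le

end NormedSpace

/-- **Proposition.** If `P : ℝ³ → (0,∞)` is continuous, even, with `∫ |x| P(x)^{-q} dx < ∞`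
for some `q > 0`, then there is a positive continuous even function `v` of at most linear growth
solving `v(x) = (8π)⁻¹ ∫ |x−y| (P(y)+v(y))^{-q} dy`, whose minimum over ℝ³ is attained at `0`. -/
theorem exists_even_solution_integral_equation_full_kernel
    (q : ℝ) (hq : 0 < q) (P : EuclideanSpace ℝ (Fin 3) → ℝ)
    (hPcont : Continuous P) (hPpos : ∀ x, 0 < P x) (hPeven : ∀ x, P (-x) = P x)
    (hPint : Integrable (fun x => ‖x‖ * (P x) ^ (-q))) :
    ∃ v : EuclideanSpace ℝ (Fin 3) → ℝ,
      Continuous v ∧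
      (∀ x, 0 < v x) ∧
      (∀ x, v (-x) = v x) ∧
      (∃ C : ℝ, ∀ x, |v x| ≤ C * (1 + ‖x‖)) ∧
      (∀ x, Integrable (fun y => ‖x - y‖ * (P y + v y) ^ (-q))) ∧
      (∀ x, v x = (8 * π)⁻¹ * ∫ y, ‖x - y‖ * (P y + v y) ^ (-q)) ∧
      (∀ x, v 0 ≤ v x) :=
  exists_even_solution_integral_equation_full_kernel_general (by positivity) hq hPcont hPpos hPeven
    hPint
end

section
/- Let f : ℝ³ → [0, ∞) be a measurable function with 0 < ∫_{ℝ³} f(y) dy < ∞, and set β := (1/8π)∫_{ℝ³} f(y) dy. Define v(x) := (1/8π)∫_{ℝ³} (|x−y| − |y|) f(y) dy. Then |v(x)| ≤ β|x| for all x ∈ ℝ³, and lim_{|x|→∞} v(x)/|x| = β. -/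
open MeasureTheory Filter Topology Real

/-!
Divide the integral by `‖x‖`. The kernel `(‖x - y‖ - ‖y‖) / ‖x‖` is bounded by `1` by the triangle
inequality and tends to `1` as `x → ∞` with `y` fixed, so dominated convergence with dominating
function `‖f‖` gives the limit.
-/

section

variable {E : Type*} [SeminormedAddCommGroup E]

lemma abs_norm_sub_sub_norm_le_norm (x y : E) : |‖x - y‖ - ‖y‖| ≤ ‖x‖ := by
  simpa using abs_norm_sub_norm_le (x - y) (-y)

lemma tendsto_norm_sub_sub_norm_div_norm_cobounded (y : E) :
    Tendsto (fun x : E => (‖x - y‖ - ‖y‖) / ‖x‖) (Bornology.cobounded E) (𝓝 1) := by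
  have lower_limit : Tendsto (fun x : E => 1 - 2 * ‖y‖ / ‖x‖) (Bornology.cobounded E) (𝓝 1) := by
    simpa only [sub_zero] using (tendsto_norm_cobounded_atTop.const_div_atTop (2 * ‖y‖)).const_sub 1
  refine lower_limit.squeeze' tendsto_const_nhds ?_ (.of_forall fun x => ?_)
  · filter_upwards [tendsto_norm_cobounded_atTop.eventually_gt_atTop 0] with x hx
    rw [le_div_iff₀ hx, sub_mul, div_mul_cancel₀ _ hx.ne']
    linarith [norm_sub_norm_le x y]
  · exact div_le_one_of_le₀ (le_of_abs_le (abs_norm_sub_sub_norm_le_norm x y)) (norm_nonneg x)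

variable [MeasurableSpace E] {μ : Measure E}
  {F : Type*} [NormedAddCommGroup F] [NormedSpace ℝ F] {f : E → F}

lemma norm_integral_norm_sub_sub_norm_smul_le (hf : Integrable f μ) (x : E) :
    ‖∫ y, (‖x - y‖ - ‖y‖) • f y ∂μ‖ ≤ (∫ y, ‖f y‖ ∂μ) * ‖x‖ := by
  rw [mul_comm, ← integral_const_mul]
  refine norm_integral_le_of_norm_le (hf.norm.const_mul ‖x‖) (.of_forall fun y => ?_)
  rw [norm_smul, Real.norm_eq_abs]
  gcongr
  exact abs_norm_sub_sub_norm_le_norm x y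

variable [OpensMeasurableSpace E]

lemma tendsto_inv_norm_smul_integral_norm_sub_sub_norm_smul (hf : Integrable f μ) :
    Tendsto (fun x => ‖x‖⁻¹ • ∫ y, (‖x - y‖ - ‖y‖) • f y ∂μ) (Bornology.cobounded E)
      (𝓝 (∫ y, f y ∂μ)) := by
  have : (Bornology.cobounded E).IsCountablyGenerated := by
    rw [← comap_norm_atTop]
    infer_instance
  simp only [← integral_smul, smul_smul, inv_mul_eq_div]
  refine tendsto_integral_filter_of_dominated_convergence (fun y => ‖f y‖)
    (.of_forall fun x => ?measurable) (.of_forall fun x => .of_forall fun y => ?bound) hf.norm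
    (.of_forall fun y => ?pointwise)
  case measurable =>
    have hkernel : Continuous fun y : E => (‖x - y‖ - ‖y‖) / ‖x‖ := by fun_prop
    exact hkernel.aestronglyMeasurable.smul hf.aestronglyMeasurable
  case bound =>
    rw [norm_smul, norm_div, norm_norm, Real.norm_eq_abs]
    exact mul_le_of_le_one_left (norm_nonneg _)
      (div_le_one_of_le₀ (abs_norm_sub_sub_norm_le_norm x y) (norm_nonneg x))
  case pointwise =>
    simpa only [one_smul] using (tendsto_norm_sub_sub_norm_div_norm_cobounded y).smul_const (f y)

theorem linear_growth_of_potential_general [CompleteSpace F] (hf : Integrable f μ) (c : ℝ)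
    {v : E → F} (hv : ∀ x, v x = c • ∫ y, (‖x - y‖ - ‖y‖) • f y ∂μ) :
    (∀ x, ‖v x‖ ≤ (|c| * ∫ y, ‖f y‖ ∂μ) * ‖x‖) ∧
    Tendsto (fun x => ‖x‖⁻¹ • v x) (Bornology.cobounded E) (𝓝 (c • ∫ y, f y ∂μ)) := by
  simp only [hv]
  constructor
  · intro x
    rw [norm_smul, Real.norm_eq_abs, mul_assoc]
    gcongr
    exact norm_integral_norm_sub_sub_norm_smul_le hf x
  · simp only [smul_comm _ c]
    exact (tendsto_inv_norm_smul_integral_norm_sub_sub_norm_smul hf).const_smul c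

end

/-- If `f ≥ 0` is measurable with `0 < ∫ f < ∞`, `β := (8π)⁻¹ ∫ f`, and
`v(x) := (8π)⁻¹ ∫ (|x−y| − |y|) f(y) dy`, then `|v(x)| ≤ β|x|` for all `x` and
`v(x)/|x| → β` as `|x| → ∞`. -/
theorem linear_growth_of_potential
    (f : EuclideanSpace ℝ (Fin 3) → ℝ)
    (hfmeas : Measurable f) (hfnn : ∀ x, 0 ≤ f x)
    (hfint : Integrable f) (hfpos : 0 < ∫ y, f y)
    (v : EuclideanSpace ℝ (Fin 3) → ℝ)
    (hv : ∀ x, v x = (8 * π)⁻¹ * ∫ y, (‖x - y‖ - ‖y‖) * f y) :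
    (∀ x, |v x| ≤ ((8 * π)⁻¹ * ∫ y, f y) * ‖x‖) ∧
    Tendsto (fun x => v x / ‖x‖) (cocompact (EuclideanSpace ℝ (Fin 3)))
      (𝓝 ((8 * π)⁻¹ * ∫ y, f y)) := by
  have hc : 0 ≤ (8 * π)⁻¹ := by positivity
  simpa only [Real.norm_eq_abs, abs_of_nonneg (hfnn _), abs_of_nonneg hc, smul_eq_mul,
    inv_mul_eq_div, Metric.cobounded_eq_cocompact] using
      linear_growth_of_potential_general hfint (8 * π)⁻¹ hv
end
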